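/- The polynomial f₀ satisfies f₀(sₖ·v) = f₀(v) for all v ∈ ℂ⁴ and all k ∈ {1,2,3,4} (so f₀ is G₂₉-invariant), and any homogeneous polynomial f of degree 4 in ℂ[x,y,z,t] satisfying f(sₖ·v) = f(v) for all v and all k ∈ {1,2,3,4} is a scalar multiple of f₀. That is, up to scalar, f₀ is the unique homogeneous G₂₉-invariant of degree 4. -/

import Mathlib

open Matrix Complex MvPolynomial

/-- The generators `s₁, s₂, s₃, s₄` of Mukai's group `G₂₉ ⊂ GL(4,ℂ)`. -/
noncomputable def S : Fin 4 → Matrix (Fin 4) (Fin 4) ℂ :=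
  ![!![1,0,0,0; 0,1,0,0; 0,0,1,0; 0,0,0,-1],
    (1/2 : ℂ) • !![1, 1, I, I; 1, 1, -I, -I; -I, I, 1, -1; -I, I, -1, 1],
    !![0,1,0,0; 1,0,0,0; 0,0,1,0; 0,0,0,1],
    !![1,0,0,0; 0,0,1,0; 0,1,0,0; 0,0,0,1]]

/-- Mukai's quartic `f₀ = Σ x⁴ − 6 Σ x²y²` in `ℂ[x,y,z,t]`. -/
noncomputable def f0 : MvPolynomial (Fin 4) ℂ :=
  X 0 ^ 4 + X 1 ^ 4 + X 2 ^ 4 + X 3 ^ 4 -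
    6 * (X 0 ^ 2 * X 1 ^ 2 + X 0 ^ 2 * X 2 ^ 2 + X 0 ^ 2 * X 3 ^ 2 +
         X 1 ^ 2 * X 2 ^ 2 + X 1 ^ 2 * X 3 ^ 2 + X 2 ^ 2 * X 3 ^ 2)

/-- The coefficient of `x^a y^b z^c t^d`. -/
noncomputable def cf (f : MvPolynomial (Fin 4) ℂ) (w : Fin 4 → ℕ) : ℂ :=
  coeff (Finsupp.equivFunOnFinite.symm w) f

lemma eval_sum (f : MvPolynomial (Fin 4) ℂ) (hf : f.IsHomogeneous 4) (v : Fin 4 → ℂ) :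
    eval v f = ∑ w ∈ Finset.Nat.antidiagonalTuple 4 4, cf f w * ∏ i, v i ^ w i := by
  rw [eval_eq']
  have h : ∑ w ∈ Finset.Nat.antidiagonalTuple 4 4, cf f w * ∏ i, v i ^ w i =
      ∑ d ∈ (Finset.Nat.antidiagonalTuple 4 4).map
        (Finsupp.equivFunOnFinite : (Fin 4 →₀ ℕ) ≃ (Fin 4 → ℕ)).symm.toEmbedding,
        coeff d f * ∏ i, v i ^ d i := by
    rw [Finset.sum_map]
    rfl
  rw [h]
  apply Finset.sum_subset
  · intro d hd
    rw [Finset.mem_map]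
    refine ⟨d, ?_, ?_⟩
    · rw [Finset.Nat.mem_antidiagonalTuple]
      have := hf (mem_support_iff.mp hd)
      rw [Finsupp.weight_apply, Finsupp.sum_fintype] at this <;> simp_all
    · ext i; rfl
  · intro d _ hd
    rw [notMem_support_iff.mp hd, zero_mul]

lemma tuple_list : List.Nat.antidiagonalTuple 4 4 = [
    ![0, 0, 0, 4], ![0, 0, 1, 3], ![0, 0, 2, 2], ![0, 0, 3, 1], ![0, 0, 4, 0],
    ![0, 1, 0, 3], ![0, 1, 1, 2], ![0, 1, 2, 1], ![0, 1, 3, 0], ![0, 2, 0, 2],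
    ![0, 2, 1, 1], ![0, 2, 2, 0], ![0, 3, 0, 1], ![0, 3, 1, 0], ![0, 4, 0, 0],
    ![1, 0, 0, 3], ![1, 0, 1, 2], ![1, 0, 2, 1], ![1, 0, 3, 0], ![1, 1, 0, 2],
    ![1, 1, 1, 1], ![1, 1, 2, 0], ![1, 2, 0, 1], ![1, 2, 1, 0], ![1, 3, 0, 0],
    ![2, 0, 0, 2], ![2, 0, 1, 1], ![2, 0, 2, 0], ![2, 1, 0, 1], ![2, 1, 1, 0],
    ![2, 2, 0, 0], ![3, 0, 0, 1], ![3, 0, 1, 0], ![3, 1, 0, 0], ![4, 0, 0, 0]] := by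
  decide

lemma eval_expl (f : MvPolynomial (Fin 4) ℂ) (hf : f.IsHomogeneous 4)
    (h3 : ∀ a b c d, cf f ![a, b, c, d] = cf f ![b, a, c, d])
    (h4 : ∀ a b c d, cf f ![a, b, c, d] = cf f ![a, c, b, d]) :
    ∃ e a g h k m n p q r u : ℂ, ∀ x y z t : ℂ, eval ![x, y, z, t] f =
      e * t ^ 4 + a * (x ^ 4 + y ^ 4 + z ^ 4) + g * t ^ 2 * (x ^ 2 + y ^ 2 + z ^ 2)
      + h * t ^ 2 * (x * y + x * z + y * z)
      + k * (x ^ 3 * y + x ^ 3 * z + y ^ 3 * x + y ^ 3 * z + z ^ 3 * x + z ^ 3 * y)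
      + m * (x ^ 2 * y ^ 2 + x ^ 2 * z ^ 2 + y ^ 2 * z ^ 2) + n * x * y * z * (x + y + z)
      + p * t ^ 3 * (x + y + z) + q * t * (x ^ 3 + y ^ 3 + z ^ 3)
      + r * t * (x ^ 2 * y + x ^ 2 * z + y ^ 2 * x + y ^ 2 * z + z ^ 2 * x + z ^ 2 * y)
      + u * t * x * y * z := by
  refine ⟨cf f ![0, 0, 0, 4],
    cf f ![4, 0, 0, 0],
    cf f ![2, 0, 0, 2],
    cf f ![1, 1, 0, 2],
    cf f ![3, 1, 0, 0],
    cf f ![2, 2, 0, 0],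
    cf f ![2, 1, 1, 0],
    cf f ![1, 0, 0, 3],
    cf f ![3, 0, 0, 1],
    cf f ![2, 1, 0, 1],
    cf f ![1, 1, 1, 1], ?_⟩
  intro x y z t
  rw [eval_sum f hf]
  change (List.map (fun w => cf f w * ∏ i, ![x, y, z, t] i ^ w i)
    (List.Nat.antidiagonalTuple 4 4)).sum = _
  rw [tuple_list]
  simp only [List.map_cons, List.map_nil, List.sum_cons, List.sum_nil, Fin.prod_univ_four]
  rw [show cf f ![0, 0, 1, 3] = cf f ![1, 0, 0, 3] from ((h4 0 0 1 3).trans (h3 0 1 0 3))]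
  rw [show cf f ![0, 0, 2, 2] = cf f ![2, 0, 0, 2] from ((h4 0 0 2 2).trans (h3 0 2 0 2))]
  rw [show cf f ![0, 0, 3, 1] = cf f ![3, 0, 0, 1] from ((h4 0 0 3 1).trans (h3 0 3 0 1))]
  rw [show cf f ![0, 0, 4, 0] = cf f ![4, 0, 0, 0] from ((h4 0 0 4 0).trans (h3 0 4 0 0))]
  rw [show cf f ![0, 1, 0, 3] = cf f ![1, 0, 0, 3] from (h3 0 1 0 3)]
  rw [show cf f ![0, 1, 1, 2] = cf f ![1, 1, 0, 2] from ((h3 0 1 1 2).trans (h4 1 0 1 2))]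
  rw [show cf f ![0, 1, 2, 1] = cf f ![2, 1, 0, 1] from (((h3 0 1 2 1).trans (h4 1 0 2 1)).trans (h3 1 2 0 1))]
  rw [show cf f ![0, 1, 3, 0] = cf f ![3, 1, 0, 0] from (((h3 0 1 3 0).trans (h4 1 0 3 0)).trans (h3 1 3 0 0))]
  rw [show cf f ![0, 2, 0, 2] = cf f ![2, 0, 0, 2] from (h3 0 2 0 2)]
  rw [show cf f ![0, 2, 1, 1] = cf f ![2, 1, 0, 1] from ((h3 0 2 1 1).trans (h4 2 0 1 1))]
  rw [show cf f ![0, 2, 2, 0] = cf f ![2, 2, 0, 0] from ((h3 0 2 2 0).trans (h4 2 0 2 0))]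
  rw [show cf f ![0, 3, 0, 1] = cf f ![3, 0, 0, 1] from (h3 0 3 0 1)]
  rw [show cf f ![0, 3, 1, 0] = cf f ![3, 1, 0, 0] from ((h3 0 3 1 0).trans (h4 3 0 1 0))]
  rw [show cf f ![0, 4, 0, 0] = cf f ![4, 0, 0, 0] from (h3 0 4 0 0)]
  rw [show cf f ![1, 0, 1, 2] = cf f ![1, 1, 0, 2] from (h4 1 0 1 2)]
  rw [show cf f ![1, 0, 2, 1] = cf f ![2, 1, 0, 1] from ((h4 1 0 2 1).trans (h3 1 2 0 1))]
  rw [show cf f ![1, 0, 3, 0] = cf f ![3, 1, 0, 0] from ((h4 1 0 3 0).trans (h3 1 3 0 0))]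
  rw [show cf f ![1, 1, 2, 0] = cf f ![2, 1, 1, 0] from ((h4 1 1 2 0).trans (h3 1 2 1 0))]
  rw [show cf f ![1, 2, 0, 1] = cf f ![2, 1, 0, 1] from (h3 1 2 0 1)]
  rw [show cf f ![1, 2, 1, 0] = cf f ![2, 1, 1, 0] from (h3 1 2 1 0)]
  rw [show cf f ![1, 3, 0, 0] = cf f ![3, 1, 0, 0] from (h3 1 3 0 0)]
  rw [show cf f ![2, 0, 1, 1] = cf f ![2, 1, 0, 1] from (h4 2 0 1 1)]
  rw [show cf f ![2, 0, 2, 0] = cf f ![2, 2, 0, 0] from (h4 2 0 2 0)]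
  rw [show cf f ![3, 0, 1, 0] = cf f ![3, 1, 0, 0] from (h4 3 0 1 0)]
  simp
  ring

lemma cf_swap (f : MvPolynomial (Fin 4) ℂ) (σ : Equiv.Perm (Fin 4)) (w : Fin 4 → ℕ)
    (h : ∀ v : Fin 4 → ℂ, eval (v ∘ σ) f = eval v f) : cf f (w ∘ σ) = cf f w := by
  have h1 : rename σ f = f := by
    apply MvPolynomial.funext
    intro v
    rw [eval_rename, h]
  unfold cf
  conv_rhs => rw [← h1]
  rw [← coeff_rename_mapDomain σ σ.injective]
  congr 1
  ext i
  obtain ⟨j, rfl⟩ := σ.surjective i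
  rw [Finsupp.mapDomain_apply σ.injective]
  rfl

lemma part1 (k : Fin 4) (v : Fin 4 → ℂ) : eval ((S k).mulVec v) f0 = eval v f0 := by
  have hI : I ^ 2 = -1 := I_sq
  have hI4 : I ^ 4 = 1 := I_pow_four
  fin_cases k <;> simp [S, f0, dotProduct, Fin.sum_univ_four]
  · ring
  · ring_nf
    simp only [hI, hI4]
    ring
  · ring
  · ring

lemma part2 (f : MvPolynomial (Fin 4) ℂ) (hf : f.IsHomogeneous 4)
    (hk : ∀ k : Fin 4, ∀ v : Fin 4 → ℂ, eval ((S k).mulVec v) f = eval v f) :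
    ∃ c : ℂ, f = c • f0 := by
  have h3 : ∀ a b c d, cf f ![a, b, c, d] = cf f ![b, a, c, d] := by
    intro a b c d
    rw [← cf_swap f (Equiv.swap 0 1) ![b, a, c, d]]
    · congr 1
      ext i
      fin_cases i <;> rfl
    · intro v
      rw [← hk 2 v]
      congr 2
      ext i
      fin_cases i <;> simp [S, dotProduct, Fin.sum_univ_four] <;> rfl
  have h4 : ∀ a b c d, cf f ![a, b, c, d] = cf f ![a, c, b, d] := by
    intro a b c d
    rw [← cf_swap f (Equiv.swap 1 2) ![a, c, b, d]]
    · congr 1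
      ext i
      fin_cases i <;> rfl
    · intro v
      rw [← hk 3 v]
      congr 2
      ext i
      fin_cases i <;> simp [S, dotProduct, Fin.sum_univ_four] <;> rfl
  obtain ⟨e, a, g, h, k, m, n, p, q, r, u, hE⟩ := eval_expl f hf h3 h4
  have H1 : ∀ x y z t : ℂ, eval ![x, y, z, -t] f = eval ![x, y, z, t] f := by
    intro x y z t
    rw [← hk 0 ![x, y, z, t]]
    congr 2
    ext i
    fin_cases i <;> simp [S]
  have H2 : ∀ x y z t : ℂ, eval ![(x + y + I * z + I * t) / 2, (x + y - I * z - I * t) / 2,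
      (-I * x + I * y + z - t) / 2, (-I * x + I * y - z + t) / 2] f = eval ![x, y, z, t] f := by
    intro x y z t
    rw [← hk 1 ![x, y, z, t]]
    congr 2
    ext i
    fin_cases i <;> simp [S] <;> ring
  simp only [hE] at H1 H2
  have a1 := H1 0 0 1 1
  have a2 := H1 0 0 1 2
  have a3 := H1 0 1 1 1
  have a4 := H1 1 1 1 1
  have hp : p = 0 := by linear_combination (-1/12) * a2 + (1/6) * a1
  have hq : q = 0 := by linear_combination (-1/2) * a1 - hp
  have hr : r = 0 := by linear_combination (-1/4) * a3 - hp - hq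
  have hu : u = 0 := by linear_combination (-1/2) * a4 - 3 * hp - 3 * hq - 6 * hr
  subst hp hq hr hu
  have hI : I ^ 2 = -1 := I_sq
  have hI3 : I ^ 3 = -I := I_pow_three
  have hI4 : I ^ 4 = 1 := I_pow_four
  have b1 := H2 0 0 0 1
  have b2 := H2 0 0 1 0
  have b3 := H2 0 1 0 0
  have b4 := H2 1 0 0 0
  have b5 := H2 0 0 1 1
  have b6 := H2 0 1 0 1
  have b7 := H2 0 1 0 (-1)
  have b8 := H2 0 1 1 0
  ring_nf at b1 b2 b3 b4 b5 b6 b7 b8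
  simp only [hI, hI3, hI4] at b1 b2 b3 b4 b5 b6 b7 b8
  have he : e = a := by linear_combination b2 - b1
  have hh : h = 0 := by grind
  have hn : n = 0 := by grind
  have hkk : k = 0 := by grind
  have hg : g = -6 * a := by grind
  have hm : m = -6 * a := by grind
  refine ⟨a, ?_⟩
  apply MvPolynomial.funext
  intro v
  have hv : v = ![v 0, v 1, v 2, v 3] := by
    ext i
    fin_cases i <;> rfl
  rw [hv, hE, he, hh, hn, hkk, hg, hm]
  simp [f0]
  ring

/-- `f₀` is invariant under the generators `s₁, s₂, s₃, s₄` of `G₂₉`, and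
every homogeneous polynomial of degree `4` invariant under them is a scalar
multiple of `f₀`: up to scalar, `f₀` is the unique degree-4 invariant of `G₂₉`. -/
theorem stmt_14 :
    (∀ k : Fin 4, ∀ v : Fin 4 → ℂ, eval ((S k).mulVec v) f0 = eval v f0) ∧
    (∀ f : MvPolynomial (Fin 4) ℂ, f.IsHomogeneous 4 →
      (∀ k : Fin 4, ∀ v : Fin 4 → ℂ, eval ((S k).mulVec v) f = eval v f) →
      ∃ c : ℂ, f = c • f0) := by
  exact ⟨part1, part2⟩
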